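/- Let n ≥ 2, let S_n = conv{e_1, …, e_n} ⊂ ℝ^n be the regular (n−1)-dimensional simplex, let z = (1/n)∑_{i=1}^n e_i be its centroid, and let L_0 be the set of lines lying in the affine hull of S_n and passing through z. Then the maximum over ℓ ∈ L_0 of the length |S_n ∩ ℓ| (1-dimensional Hausdorff measure) equals √(n/(n−1)), and the maximum is attained if and only if ℓ passes through one of the vertices e_1, …, e_n of S_n. -/

import Mathlib

open MeasureTheory Metric Set
open scoped ENNReal

/-!
A line through the centroid `z` in the affine hull of the simplex is `{z + t • d}` with `d ≠ 0` and
`∑ d i = 0`. Let `M = d j > 0` be the largest coordinate of `d` and `-m = d k < 0` the smallest one.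
The point `z + t • d` lies in the simplex iff all its coordinates are nonnegative, i.e. iff
`-1 / (n M) ≤ t ≤ 1 / (n m)`, so the chord has length `‖d‖ (1 / M + 1 / m) / n` (`exists_chord`).

Two inequalities bound this. Summing `(M - d i) (d i + m) ≥ 0` over `i` gives `‖d‖² ≤ n M m`.
Since the coordinates sum to zero, `M ≤ (n - 1) m` and `m ≤ (n - 1) M`, and therefore
`n² M m - (n - 1) (M + m)² = ((n - 1) m - M) ((n - 1) M - m) ≥ 0`. Together they give
`‖d‖² (1 / M + 1 / m)² / n² ≤ n / (n - 1)` (`chord_sq_le`). Equality forces `M = (n - 1) m` or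
`m = (n - 1) M`; then all coordinates but one coincide, so `d` is parallel to `e_i - z` for some `i`
(`vertex_of_chord_sq_eq`). The converse is a direct computation (`chord_sq_eq_of_vertex`).
-/

/-! ### The chord cut out by a line through the centroid -/

lemma mem_simplex_iff {n : ℕ} (p : EuclideanSpace ℝ (Fin n)) :
    p ∈ convexHull ℝ (Set.range fun i : Fin n => EuclideanSpace.single i (1:ℝ)) ↔
      (∀ i, 0 ≤ p i) ∧ ∑ i, p i = 1 := by
  constructor
  · intro hp
    have hc : Convex ℝ {p : EuclideanSpace ℝ (Fin n) | (∀ i, 0 ≤ p i) ∧ ∑ i, p i = 1} := by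
      rintro x ⟨hx, hx'⟩ y ⟨hy, hy'⟩ a b ha hb hab
      refine ⟨fun i => ?_, ?_⟩
      · have := hx i
        have := hy i
        simp only [PiLp.add_apply, PiLp.smul_apply, smul_eq_mul]
        positivity
      · simp [Finset.sum_add_distrib, ← Finset.mul_sum, hx', hy', hab]
    refine convexHull_min ?_ hc hp
    rintro _ ⟨i, rfl⟩
    refine ⟨fun j => ?_, ?_⟩
    · simp only [PiLp.single_apply]
      split_ifs <;> norm_num
    · simp [PiLp.single_apply]
  · rintro ⟨h0, h1⟩
    have hp : p = ∑ i, p i • EuclideanSpace.single i (1:ℝ) := by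
      ext j
      simp [Pi.single_apply]
    rw [hp]
    exact (convex_convexHull ℝ _).sum_mem (fun i _ => h0 i) h1
      (fun i _ => subset_convexHull ℝ _ ⟨i, rfl⟩)

lemma sum_eq_one_of_mem_affineSpan {n : ℕ} {p : EuclideanSpace ℝ (Fin n)}
    (hp : p ∈ affineSpan ℝ (Set.range fun i : Fin n => EuclideanSpace.single i (1:ℝ))) :
    ∑ i, p i = 1 := by
  refine affineSpan_induction (p := fun p : EuclideanSpace ℝ (Fin n) => ∑ i, p i = 1) hp ?_ ?_
  · rintro _ ⟨i, rfl⟩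
    simp [PiLp.single_apply]
  · intro c u v w hu hv hw
    simp [Finset.sum_add_distrib, ← Finset.mul_sum, hu, hv, hw]

/-- A line through the centroid in the affine hull has a direction vector `d` of coordinate sum
zero, and its chord length is determined by `d`, its largest coordinate `d j` and its smallest
coordinate `d k`. -/
lemma exists_chord {n : ℕ} (hn : 2 ≤ n) (z : EuclideanSpace ℝ (Fin n))
    (hz : ∀ i, z i = 1 / (n:ℝ)) (ℓ : AffineSubspace ℝ (EuclideanSpace ℝ (Fin n)))
    (h1 : Module.finrank ℝ ℓ.direction = 1)
    (hle : ℓ ≤ affineSpan ℝ (Set.range fun i : Fin n => EuclideanSpace.single i (1:ℝ)))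
    (hzl : z ∈ ℓ) :
    ∃ (d : EuclideanSpace ℝ (Fin n)) (j k : Fin n),
      (∀ p, p ∈ ℓ ↔ ∃ t : ℝ, p = z + t • d) ∧ ∑ i, d i = 0 ∧ (∀ i, d i ≤ d j) ∧ (∀ i, d k ≤ d i) ∧
      0 < d j ∧ d k < 0 ∧
      μH[1] (convexHull ℝ (Set.range fun i : Fin n => EuclideanSpace.single i (1:ℝ)) ∩
          (ℓ : Set (EuclideanSpace ℝ (Fin n)))) =
        ENNReal.ofReal (Real.sqrt ((∑ i, d i ^ 2) * (1 / d j - 1 / d k) ^ 2 / (n:ℝ) ^ 2)) := by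
  have hn0 : (0:ℝ) < n := by positivity
  have : Nonempty (Fin n) := ⟨⟨0, by omega⟩⟩
  obtain ⟨⟨d, hd⟩, hd0, hspan⟩ := finrank_eq_one_iff'.1 h1
  have hd0' : d ≠ 0 := fun h => hd0 (Subtype.ext h)
  have hmem : ∀ p, p ∈ ℓ ↔ ∃ t : ℝ, p = z + t • d := by
    intro p
    constructor
    · intro hp
      obtain ⟨t, ht⟩ := hspan ⟨p - z, ℓ.vsub_mem_direction hp hzl⟩
      have ht' : t • d = p - z := congrArg Subtype.val ht
      exact ⟨t, by rw [ht']; abel⟩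
    · rintro ⟨t, rfl⟩
      rw [add_comm]
      exact AffineSubspace.vadd_mem_of_mem_direction (ℓ.direction.smul_mem t hd) hzl
  have hzs : ∑ i, z i = 1 := sum_eq_one_of_mem_affineSpan (hle hzl)
  have hsum : ∑ i, d i = 0 := by
    have := sum_eq_one_of_mem_affineSpan (hle ((hmem (z + (1:ℝ) • d)).2 ⟨1, rfl⟩))
    simp [Finset.sum_add_distrib] at this
    linarith
  obtain ⟨j, hj⟩ := Finite.exists_max (fun i => d i)
  obtain ⟨k, hk⟩ := Finite.exists_min (fun i => d i)
  have hj0 : 0 < d j := by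
    by_contra! h
    apply hd0'
    ext i
    exact (Finset.sum_eq_zero_iff_of_nonpos (fun i _ => (hj i).trans h)).1 hsum i (Finset.mem_univ i)
  have hk0 : d k < 0 := by
    by_contra! h
    apply hd0'
    ext i
    exact (Finset.sum_eq_zero_iff_of_nonneg (fun i _ => h.trans (hk i))).1 hsum i (Finset.mem_univ i)
  refine ⟨d, j, k, hmem, hsum, hj, hk, hj0, hk0, ?_⟩
  set a : ℝ := -1 / (n * d j) with ha
  set b : ℝ := -1 / (n * d k) with hb
  have hab : a ≤ b := by
    have h1 : a ≤ 0 := div_nonpos_of_nonpos_of_nonneg (by norm_num) (by positivity)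
    have h2 : 0 ≤ b := div_nonneg_of_nonpos (by norm_num) (by nlinarith)
    linarith
  have hset : convexHull ℝ (Set.range fun i : Fin n => EuclideanSpace.single i (1:ℝ)) ∩
      (ℓ : Set (EuclideanSpace ℝ (Fin n))) = segment ℝ (z + a • d) (z + b • d) := by
    have hfun : ∀ t : ℝ, AffineMap.lineMap z (z + d) t = z + t • d := by
      intro t
      simp [AffineMap.lineMap_apply, add_comm]
    rw [← hfun a, ← hfun b, ← image_segment, segment_eq_Icc hab]
    ext p
    simp only [mem_inter_iff, mem_simplex_iff, SetLike.mem_coe, hmem, mem_image, hfun, mem_Icc]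
    constructor
    · rintro ⟨⟨h0, -⟩, t, rfl⟩
      refine ⟨t, ⟨?_, ?_⟩, rfl⟩
      · have := h0 j
        simp only [PiLp.add_apply, PiLp.smul_apply, smul_eq_mul, hz] at this
        rw [ha, div_le_iff₀ (by positivity)]
        have h := mul_nonneg hn0.le this
        field_simp at h
        linarith
      · have := h0 k
        simp only [PiLp.add_apply, PiLp.smul_apply, smul_eq_mul, hz] at this
        rw [hb, le_div_iff_of_neg (by nlinarith)]
        have h := mul_nonneg hn0.le this
        field_simp at h
        linarith
    · rintro ⟨t, ⟨hat, htb⟩, rfl⟩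
      refine ⟨⟨fun i => ?_, ?_⟩, t, rfl⟩
      · simp only [PiLp.add_apply, PiLp.smul_apply, smul_eq_mul, hz]
        rw [ha, div_le_iff₀ (by positivity)] at hat
        rw [hb, le_div_iff_of_neg (by nlinarith)] at htb
        have key : 0 ≤ 1 + n * (t * d i) := by
          rcases le_total 0 t with ht | ht
          · nlinarith [mul_le_mul_of_nonneg_left (hk i) (mul_nonneg hn0.le ht)]
          · nlinarith [mul_le_mul_of_nonneg_left (hj i) (mul_nonneg hn0.le (neg_nonneg.2 ht))]
        have : 1 / (n:ℝ) + t * d i = (1 + n * (t * d i)) / n := by field_simp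
        rw [this]
        positivity
      · simp [Finset.sum_add_distrib, ← Finset.mul_sum, hsum, hzs]
  rw [hset, hausdorffMeasure_segment, edist_dist]
  congr 1
  rw [dist_eq_norm]
  have h1 : z + a • d - (z + b • d) = (a - b) • d := by rw [sub_smul]; abel
  rw [h1, norm_smul, EuclideanSpace.norm_eq, Real.norm_eq_abs, ← Real.sqrt_sq_eq_abs,
    ← Real.sqrt_mul (sq_nonneg _)]
  congr 1
  simp only [Real.norm_eq_abs, sq_abs]
  have h2 : a - b = -(1 / d j - 1 / d k) / n := by
    rw [ha, hb]
    have := hk0.ne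
    field_simp
    ring
  rw [h2]
  ring

/-! ### The inequality between direction coordinates -/

section Estimate

variable {n : ℕ} {d : Fin n → ℝ} {j k : Fin n}

/-- If `d` sums to zero and no coordinate exceeds `d j`, then `-d k ≤ (n - 1) d j`; if equality
holds, every coordinate other than `d k` equals `d j`. -/
lemma neg_le_of_max (hsum : ∑ i, d i = 0) (hj : ∀ i, d i ≤ d j) :
    -d k ≤ (n - 1) * d j ∧ (-d k = (n - 1) * d j → ∀ i, i ≠ k → d i = d j) := by
  have h0 : ∀ i ∈ Finset.univ.erase k, 0 ≤ d j - d i := fun i _ => sub_nonneg.2 (hj i)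
  have hs : ∑ i ∈ Finset.univ.erase k, (d j - d i) = (n - 1) * d j + d k := by
    have := Finset.add_sum_erase Finset.univ (fun i => d j - d i) (Finset.mem_univ k)
    have hs' : ∑ i, (d j - d i) = n * d j := by simp [Finset.sum_sub_distrib, hsum]
    linarith
  have := Finset.sum_nonneg h0
  refine ⟨by linarith, fun he i hi => ?_⟩
  have := (Finset.sum_eq_zero_iff_of_nonneg h0).1 (by linarith) i (by simp [hi])
  linarith

/-- `neg_le_of_max` applied to `-d`. -/
lemma le_of_min (hsum : ∑ i, d i = 0) (hk : ∀ i, d k ≤ d i) :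
    d j ≤ (n - 1) * -d k ∧ (d j = (n - 1) * -d k → ∀ i, i ≠ j → d i = d k) := by
  have := neg_le_of_max (d := fun i => -d i) (j := k) (k := j) (by simp [hsum])
    (fun i => neg_le_neg (hk i))
  simpa using this

lemma sum_sq_le (hsum : ∑ i, d i = 0) (hj : ∀ i, d i ≤ d j) (hk : ∀ i, d k ≤ d i) :
    ∑ i, d i ^ 2 ≤ n * d j * -d k := by
  have h : 0 ≤ ∑ i, (d j - d i) * (d i - d k) :=
    Finset.sum_nonneg fun i _ => mul_nonneg (sub_nonneg.2 (hj i)) (sub_nonneg.2 (hk i))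
  have h2 : ∑ i, (d j - d i) * (d i - d k) =
      (d j + d k) * ∑ i, d i - ∑ i, d i ^ 2 + n * d j * -d k := by
    rw [Finset.mul_sum, ← Finset.sum_sub_distrib]
    have : (n:ℝ) * d j * -d k = ∑ _i : Fin n, d j * -d k := by simp; ring
    rw [this, ← Finset.sum_add_distrib]
    exact Finset.sum_congr rfl fun i _ => by ring
  rw [h2, hsum] at h
  linarith

/-- The gap between `n / (n - 1)` and the squared chord length is at least a positive multiple of
`((n - 1) m - M) ((n - 1) M - m)`, where `M = d j` and `m = -d k`. -/
lemma chord_sq_add_le (hn : 2 ≤ n) (hsum : ∑ i, d i = 0) (hj : ∀ i, d i ≤ d j)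
    (hk : ∀ i, d k ≤ d i) (hj0 : 0 < d j) (hk0 : d k < 0) :
    (∑ i, d i ^ 2) * (1 / d j - 1 / d k) ^ 2 / (n:ℝ) ^ 2 +
      (((n - 1) * -d k - d j) * ((n - 1) * d j + d k)) / (n * (n - 1) * d j * -d k) ≤
        n / ((n:ℝ) - 1) := by
  have hn' : (2:ℝ) ≤ n := by exact_mod_cast hn
  have hn1 : (0:ℝ) < n - 1 := by linarith
  have hn0 : (0:ℝ) < n := by linarith
  have h := sum_sq_le hsum hj hk
  obtain ⟨m, hm⟩ : ∃ m, m = -d k := ⟨_, rfl⟩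
  have hkm : d k = -m := by linarith
  rw [hkm] at h ⊢
  have hm0 : 0 < m := by linarith
  calc _ ≤ (n * d j * - -m) * (1 / d j - 1 / -m) ^ 2 / (n:ℝ) ^ 2 +
        (((n - 1) * - -m - d j) * ((n - 1) * d j + -m)) / (n * (n - 1) * d j * - -m) := by
        gcongr
    _ = _ := by
        rw [neg_neg, one_div_neg_eq_neg_one_div]
        have := hn1.ne'
        field_simp
        ring

lemma gap_nonneg (hn : 2 ≤ n) (hsum : ∑ i, d i = 0) (hj : ∀ i, d i ≤ d j)
    (hk : ∀ i, d k ≤ d i) (hj0 : 0 < d j) (hk0 : d k < 0) :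
    0 ≤ (((n - 1) * -d k - d j) * ((n - 1) * d j + d k)) / (n * (n - 1) * d j * -d k) := by
  have hn' : (2:ℝ) ≤ n := by exact_mod_cast hn
  have hn1 : (0:ℝ) < n - 1 := by linarith
  have h1 := (neg_le_of_max (k := k) hsum hj).1
  have h2 := (le_of_min (j := j) hsum hk).1
  have hm0 : 0 < -d k := by linarith
  exact div_nonneg (mul_nonneg (by linarith) (by linarith)) (by positivity)

lemma chord_sq_le (hn : 2 ≤ n) (hsum : ∑ i, d i = 0) (hj : ∀ i, d i ≤ d j)
    (hk : ∀ i, d k ≤ d i) (hj0 : 0 < d j) (hk0 : d k < 0) :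
    (∑ i, d i ^ 2) * (1 / d j - 1 / d k) ^ 2 / (n:ℝ) ^ 2 ≤ n / ((n:ℝ) - 1) := by
  have := chord_sq_add_le hn hsum hj hk hj0 hk0
  have := gap_nonneg hn hsum hj hk hj0 hk0
  linarith

/-- In the equality case, `d` is parallel to `e_i - z` for some vertex `e_i`. -/
lemma vertex_of_chord_sq_eq (hn : 2 ≤ n) (hsum : ∑ i, d i = 0) (hj : ∀ i, d i ≤ d j)
    (hk : ∀ i, d k ≤ d i) (hj0 : 0 < d j) (hk0 : d k < 0)
    (he : (∑ i, d i ^ 2) * (1 / d j - 1 / d k) ^ 2 / (n:ℝ) ^ 2 = n / ((n:ℝ) - 1)) :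
    ∃ (i : Fin n) (t : ℝ), ∀ i', (if i' = i then 1 else 0) = 1 / (n:ℝ) + t * d i' := by
  have hn' : (2:ℝ) ≤ n := by exact_mod_cast hn
  have hn1 : (0:ℝ) < n - 1 := by linarith
  have hn0 : (0:ℝ) < n := by linarith
  have hm0 : 0 < -d k := by linarith
  have h1 := chord_sq_add_le hn hsum hj hk hj0 hk0
  have h2 := gap_nonneg hn hsum hj hk hj0 hk0
  have h3 := le_antisymm (by linarith) h2
  have hden : (n * (n - 1) * d j * -d k : ℝ) ≠ 0 := by positivity
  rcases mul_eq_zero.1 ((div_eq_zero_iff.1 h3).resolve_right hden) with h | h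
  · have hv : d j = (n - 1) * -d k := by linarith
    have hall := (le_of_min (j := j) hsum hk).2 hv
    refine ⟨j, 1 / (n * -d k), fun i' => ?_⟩
    have := hk0.ne
    split_ifs with hi
    · rw [hi, hv]
      field_simp
      ring
    · rw [hall i' hi]
      field_simp
      ring
  · have hv : -d k = (n - 1) * d j := by linarith
    have hall := (neg_le_of_max (k := k) hsum hj).2 hv
    refine ⟨k, -1 / (n * d j), fun i' => ?_⟩
    split_ifs with hi
    · rw [hi, show d k = -((n - 1) * d j) by linarith]
      field_simp
      ring
    · rw [hall i' hi]
      field_simp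
      ring

lemma chord_sq_eq_of_vertex (hn : 2 ≤ n) (hj0 : 0 < d j) (hk0 : d k < 0) {i : Fin n} {t : ℝ}
    (h : ∀ i', (if i' = i then 1 else 0) = 1 / (n:ℝ) + t * d i') :
    (∑ i, d i ^ 2) * (1 / d j - 1 / d k) ^ 2 / (n:ℝ) ^ 2 = n / ((n:ℝ) - 1) := by
  have hn' : (2:ℝ) ≤ n := by exact_mod_cast hn
  have hn1 : (0:ℝ) < n - 1 := by linarith
  have hn0 : (0:ℝ) < n := by linarith
  have ht : t ≠ 0 := by
    rintro rfl
    have := h i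
    simp only [if_true, zero_mul, add_zero] at this
    field_simp at this
    linarith
  have hdi : d i = (n - 1) / (n * t) := by
    have := h i
    simp only [if_true] at this
    field_simp at this ⊢
    linarith
  have hdo : ∀ i', i' ≠ i → d i' = -1 / (n * t) := by
    intro i' hi
    have := h i'
    simp only [hi, if_false] at this
    field_simp at this ⊢
    linarith
  have hsq : ∑ i, d i ^ 2 = (n - 1) / (n * t ^ 2) := by
    rw [← Finset.add_sum_erase _ _ (Finset.mem_univ i),
      Finset.sum_congr rfl (g := fun _ => (-1 / (n * t)) ^ 2)
        (fun i' hi' => by rw [hdo i' (Finset.ne_of_mem_erase hi')]), hdi]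
    simp [Nat.cast_sub (show 1 ≤ n by omega)]
    field_simp
    ring
  have := hn1.ne'
  rw [hsq]
  -- The largest and the smallest coordinate have opposite signs, so exactly one of them is `d i`.
  by_cases hji : j = i
  · have hki : k ≠ i := by rintro rfl; rw [hji] at hj0; linarith
    rw [hji, hdi, hdo k hki]
    field_simp
    ring
  · have hki : k = i := by
      by_contra hki
      rw [hdo j hji] at hj0
      rw [hdo k hki] at hk0
      linarith
    rw [hki, hdi, hdo j hji]
    field_simp
    ring

end Estimate

/-! ### The longest chord through the centroid -/

theorem stmt19 (n : ℕ) (hn : 2 ≤ n)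
    (S : Set (EuclideanSpace ℝ (Fin n)))
    (hS : S = convexHull ℝ (Set.range fun i : Fin n => EuclideanSpace.single i (1:ℝ)))
    (z : EuclideanSpace ℝ (Fin n)) (hz : ∀ i, z i = 1 / (n:ℝ)) :
    IsGreatest
      { L : ℝ≥0∞ | ∃ ℓ : AffineSubspace ℝ (EuclideanSpace ℝ (Fin n)),
          Module.finrank ℝ ℓ.direction = 1 ∧
          ℓ ≤ affineSpan ℝ (Set.range fun i : Fin n => EuclideanSpace.single i (1:ℝ)) ∧
          z ∈ ℓ ∧ L = μH[1] (S ∩ ℓ) }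
      (ENNReal.ofReal (Real.sqrt ((n:ℝ) / ((n:ℝ) - 1)))) ∧
    ∀ ℓ : AffineSubspace ℝ (EuclideanSpace ℝ (Fin n)),
      Module.finrank ℝ ℓ.direction = 1 →
      ℓ ≤ affineSpan ℝ (Set.range fun i : Fin n => EuclideanSpace.single i (1:ℝ)) →
      z ∈ ℓ →
      (μH[1] (S ∩ ℓ) = ENNReal.ofReal (Real.sqrt ((n:ℝ) / ((n:ℝ) - 1))) ↔
        ∃ i : Fin n, EuclideanSpace.single i (1:ℝ) ∈ ℓ) := by
  subst hS
  have hn' : (2:ℝ) ≤ n := by exact_mod_cast hn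
  have hn0 : (0:ℝ) < n := by linarith
  have hbound : ∀ ℓ : AffineSubspace ℝ (EuclideanSpace ℝ (Fin n)),
      Module.finrank ℝ ℓ.direction = 1 →
      ℓ ≤ affineSpan ℝ (Set.range fun i : Fin n => EuclideanSpace.single i (1:ℝ)) →
      z ∈ ℓ → μH[1] (convexHull ℝ (Set.range fun i : Fin n => EuclideanSpace.single i (1:ℝ)) ∩
          (ℓ : Set (EuclideanSpace ℝ (Fin n)))) ≤
        ENNReal.ofReal (Real.sqrt ((n:ℝ) / ((n:ℝ) - 1))) := by
    intro ℓ h1 hle hzl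
    obtain ⟨d, j, k, -, hsum, hj, hk, hj0, hk0, hμ⟩ := exists_chord hn z hz ℓ h1 hle hzl
    rw [hμ]
    exact ENNReal.ofReal_le_ofReal
      (Real.sqrt_le_sqrt (chord_sq_le (d := d) hn hsum hj hk hj0 hk0))
  have hiff : ∀ ℓ : AffineSubspace ℝ (EuclideanSpace ℝ (Fin n)),
      Module.finrank ℝ ℓ.direction = 1 →
      ℓ ≤ affineSpan ℝ (Set.range fun i : Fin n => EuclideanSpace.single i (1:ℝ)) →
      z ∈ ℓ →
      (μH[1] (convexHull ℝ (Set.range fun i : Fin n => EuclideanSpace.single i (1:ℝ)) ∩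
          (ℓ : Set (EuclideanSpace ℝ (Fin n)))) =
        ENNReal.ofReal (Real.sqrt ((n:ℝ) / ((n:ℝ) - 1))) ↔
        ∃ i : Fin n, EuclideanSpace.single i (1:ℝ) ∈ ℓ) := by
    intro ℓ h1 hle hzl
    obtain ⟨d, j, k, hmem, hsum, hj, hk, hj0, hk0, hμ⟩ := exists_chord hn z hz ℓ h1 hle hzl
    have hvert : ∀ (i : Fin n) (t : ℝ), EuclideanSpace.single i (1:ℝ) = z + t • d ↔
        ∀ i', (if i' = i then 1 else 0) = 1 / (n:ℝ) + t * d i' := by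
      intro i t
      rw [PiLp.ext_iff]
      simp [hz]
    rw [hμ, ENNReal.ofReal_eq_ofReal_iff (Real.sqrt_nonneg _) (Real.sqrt_nonneg _),
      Real.sqrt_inj (by positivity) (div_nonneg hn0.le (by linarith))]
    constructor
    · intro he
      obtain ⟨i, t, h⟩ := vertex_of_chord_sq_eq (d := d) hn hsum hj hk hj0 hk0 he
      exact ⟨i, (hmem _).2 ⟨t, (hvert i t).2 h⟩⟩
    · rintro ⟨i, hi⟩
      obtain ⟨t, ht⟩ := (hmem _).1 hi
      exact chord_sq_eq_of_vertex (d := d) hn hj0 hk0 ((hvert i t).1 ht)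
  refine ⟨⟨?_, ?_⟩, hiff⟩
  · set e : EuclideanSpace ℝ (Fin n) := EuclideanSpace.single ⟨0, by omega⟩ (1:ℝ) with he
    have hze : e ≠ z := by
      intro h
      have h0 := congrArg (fun p : EuclideanSpace ℝ (Fin n) => p ⟨1, by omega⟩) h
      simp only [he, hz, PiLp.single_apply, Fin.mk.injEq, one_ne_zero, if_false] at h0
      exact (one_div_pos.2 hn0).ne h0
    have h1 : Module.finrank ℝ (affineSpan ℝ {z, e}).direction = 1 := by
      rw [direction_affineSpan, vectorSpan_pair_rev]
      exact finrank_span_singleton (sub_ne_zero.2 hze)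
    have hle : affineSpan ℝ {z, e} ≤
        affineSpan ℝ (Set.range fun i : Fin n => EuclideanSpace.single i (1:ℝ)) := by
      refine affineSpan_le.2 ?_
      rintro p (rfl | rfl)
      · refine convexHull_subset_affineSpan _ ((mem_simplex_iff _).2 ⟨fun i => ?_, ?_⟩)
        · rw [hz]; positivity
        · simp [hz, hn0.ne']
      · exact subset_affineSpan ℝ _ ⟨_, rfl⟩
    have hzl : z ∈ affineSpan ℝ {z, e} := left_mem_affineSpan_pair ℝ z e
    exact ⟨_, h1, hle, hzl,
      ((hiff _ h1 hle hzl).2 ⟨_, right_mem_affineSpan_pair ℝ z e⟩).symm⟩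
  · rintro _ ⟨ℓ, h1, hle, hzl, rfl⟩
    exact hbound ℓ h1 hle hzl
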